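/- There exist integers c_{j,k,i}, indexed by pairs (j,k) with 1 ≤ j ≤ k ≤ n−1 and by 1 ≤ i ≤ N, such that for every t = (t_1,…,t_N) ∈ (0,∞)^N and every 1 ≤ i ≤ N, one has t_i = ∏_{1 ≤ j ≤ k ≤ n−1} M_{j,k}(A(t))^{c_{j,k,i}} (an integer-power product of positive real numbers). In particular, the parameters t_1,…,t_N are Laurent monomials in the minors M_{j,k}(A(t)). -/

import Mathlib

noncomputable section

open Matrix

/-- `N = n(n-1)/2`, the number of parameters. -/
def Npar (n : ℕ) : ℕ := n * (n - 1) / 2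

/-- The decreasing run `a, a-1, …, b` (empty if `b > a`). -/
def decRun (a b : ℕ) : List ℕ := (List.range' b (a + 1 - b)).reverse

/-- The index sequence `(i_1, …, i_N)`: for `m = 1, …, ⌊n/2⌋` (here `m` is 0-based, so
`m+1` is the 1-based block index), concatenate `n`, the run `n-2, …, 2(m+1)-1`, and the
run `n-1, …, 2(m+1)`. -/
def wordD (n : ℕ) : List ℕ :=
  ((List.range (n / 2)).map (fun m =>
    n :: (decRun (n - 2) (2 * m + 1) ++ decRun (n - 1) (2 * m + 2)))).flatten

/-- The matrix `x_i(t)` (index `i` is 1-based, matrix positions are 1-based in the paper,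
0-based here). -/
def xMat (n : ℕ) (i : ℕ) (t : ℝ) : Matrix (Fin (2 * n)) (Fin (2 * n)) ℝ :=
  Matrix.of fun p q =>
    (if (p : ℕ) = (q : ℕ) then 1 else 0) +
    (if i < n then
        (if (p : ℕ) + 1 = i ∧ (q : ℕ) + 1 = i + 1 then t else 0)
      + (if (p : ℕ) + 1 = n + i + 1 ∧ (q : ℕ) + 1 = n + i then -t else 0)
     else
        (if (p : ℕ) + 1 = n - 1 ∧ (q : ℕ) + 1 = 2 * n then t else 0)
      + (if (p : ℕ) + 1 = n ∧ (q : ℕ) + 1 = 2 * n - 1 then -t else 0))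

/-- The product `x_{i_1}(t_1) ⋯ x_{i_N}(t_N)`; the parameter `t l` plays the role of
`t_{l+1}`. -/
def prodX (n : ℕ) (t : ℕ → ℝ) : Matrix (Fin (2 * n)) (Fin (2 * n)) ℝ :=
  ((List.range (Npar n)).map (fun l => xMat n ((wordD n).getD l 0) (t l))).prod

/-- The first block `X₁(t)` of the first `n` rows of the product. -/
def X1 (n : ℕ) (t : ℕ → ℝ) : Matrix (Fin n) (Fin n) ℝ :=
  Matrix.of fun p q =>
    prodX n t ⟨(p : ℕ), by have := p.isLt; omega⟩ ⟨(q : ℕ), by have := q.isLt; omega⟩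

/-- The second block `X₂(t)` of the first `n` rows of the product. -/
def X2 (n : ℕ) (t : ℕ → ℝ) : Matrix (Fin n) (Fin n) ℝ :=
  Matrix.of fun p q =>
    prodX n t ⟨(p : ℕ), by have := p.isLt; omega⟩ ⟨n + (q : ℕ), by have := q.isLt; omega⟩

/-- The skew-symmetric matrix `A(t) = X₁(t)⁻¹ · X₂(t)`. -/
def Amat (n : ℕ) (t : ℕ → ℝ) : Matrix (Fin n) (Fin n) ℝ := (X1 n t)⁻¹ * X2 n t

/-- The set `S_n^{>0}` of totally positive skew-symmetric matrices. -/
def Spos (n : ℕ) : Set (Matrix (Fin n) (Fin n) ℝ) :=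
  { A | ∃ t : ℕ → ℝ, (∀ i < Npar n, 0 < t i) ∧ A = Amat n t }

/-- The signed minor `M_{j,k}(A)`: `(-1)^{jk}` times the determinant of the submatrix of `A`
with (1-based) rows `{1,…,n-k-1} ∪ {n-k+j,…,n}` and columns `{1,…,n-j}`. -/
def Mminor (n j k : ℕ) (A : Matrix (Fin n) (Fin n) ℝ) : ℝ :=
  (-1 : ℝ) ^ (j * k) *
    Matrix.det (Matrix.of fun (p q : Fin (n - j)) =>
      A (if (p : ℕ) < n - k - 1
          then ⟨(p : ℕ), by have := p.isLt; omega⟩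
          else ⟨(p : ℕ) + j, by have := p.isLt; omega⟩)
        ⟨(q : ℕ), by have := q.isLt; omega⟩)

/-- The Pfaffian of an `m × m` matrix (intended for `m` even):
`Pf(B) = (1/(2^{m/2} (m/2)!)) Σ_σ sgn(σ) Π_i B_{σ(2i-1), σ(2i)}`. -/
def Pfaff {m : ℕ} (B : Matrix (Fin m) (Fin m) ℝ) : ℝ :=
  (1 / ((2 : ℝ) ^ (m / 2) * (Nat.factorial (m / 2) : ℝ))) *
    ∑ σ : Equiv.Perm (Fin m), ((Equiv.Perm.sign σ : ℤ) : ℝ) *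
      ∏ i : Fin (m / 2),
        B (σ ⟨2 * (i : ℕ), by have := i.isLt; omega⟩)
          (σ ⟨2 * (i : ℕ) + 1, by have := i.isLt; omega⟩)

/-- `Pf_I(A)`: the Pfaffian of the submatrix of `A` with rows and columns indexed by `I`
in increasing order. -/
def PfI {n : ℕ} (A : Matrix (Fin n) (Fin n) ℝ) (I : Finset (Fin n)) : ℝ :=
  Pfaff (Matrix.of fun (p q : Fin I.card) =>
    A ((I.orderIsoOfFin rfl p : Fin n)) ((I.orderIsoOfFin rfl q : Fin n)))

/-- `sgn(I,[n]) = (-1)^{(Σ_{i∈I} i) - |I|(|I|+1)/2}` (the elements of `I` are 1-based, so a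
0-based element `i` contributes `i+1`; the natural subtraction agrees with the integer one
since the sum of `|I|` distinct positive integers is at least `|I|(|I|+1)/2`). -/
def sgnSet {n : ℕ} (I : Finset (Fin n)) : ℝ :=
  (-1 : ℝ) ^ ((∑ i ∈ I, ((i : ℕ) + 1)) - I.card * (I.card + 1) / 2)

/-- The block matrix `[Id_n | A]`. -/
def IdA {n : ℕ} (A : Matrix (Fin n) (Fin n) ℝ) : Matrix (Fin n) (Fin (2 * n)) ℝ :=
  Matrix.of fun p q =>
    if h : (q : ℕ) < n then (if (p : ℕ) = (q : ℕ) then 1 else 0)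
    else A p ⟨(q : ℕ) - n, by have := q.isLt; omega⟩

/-- The full word `(j_1, …, j_{2N})`: `1, 2,1, 3,2,1, …, n-1,…,1` followed by `(i_1,…,i_N)`. -/
def wordFull (n : ℕ) : List ℕ :=
  (((List.range n).map (fun r => decRun r 1)).flatten) ++ wordD n

/-- `z(ε) = x_{j_1}(ε) ⋯ x_{j_{2N}}(ε)`. -/
def zeps (n : ℕ) (ε : ℝ) : Matrix (Fin (2 * n)) (Fin (2 * n)) ℝ :=
  ((wordFull n).map (fun i => xMat n i ε)).prod

/-- `Z(ε) = z(ε)ᵀ · z(ε)`. -/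
def Zeps (n : ℕ) (ε : ℝ) : Matrix (Fin (2 * n)) (Fin (2 * n)) ℝ :=
  (zeps n ε)ᵀ * zeps n ε

/-- First block `Y₁(ε)` of `[Id_n | A] · Z(ε)`. -/
def Y1 {n : ℕ} (A : Matrix (Fin n) (Fin n) ℝ) (ε : ℝ) : Matrix (Fin n) (Fin n) ℝ :=
  Matrix.of fun p q => (IdA A * Zeps n ε) p ⟨(q : ℕ), by have := q.isLt; omega⟩

/-- Second block `Y₂(ε)` of `[Id_n | A] · Z(ε)`. -/
def Y2 {n : ℕ} (A : Matrix (Fin n) (Fin n) ℝ) (ε : ℝ) : Matrix (Fin n) (Fin n) ℝ :=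
  Matrix.of fun p q => (IdA A * Zeps n ε) p ⟨n + (q : ℕ), by have := q.isLt; omega⟩

/-- The simple generators `s_i` of the Weyl group `W` of `SO(2n)`, as permutations of
`{1,…,2n}` (0-based here): for `1 ≤ i ≤ n-1`, `s_i = (i,i+1)(n+i,n+i+1)`; for `i = n`,
`s_n = (n,2n-1)(n-1,2n)`. -/
def sGen (n : ℕ) (i : ℕ) : Equiv.Perm (Fin (2 * n)) :=
  if h : 1 ≤ i ∧ i ≤ n - 1 ∧ 2 ≤ n then
    Equiv.swap ⟨i - 1, by omega⟩ ⟨i, by omega⟩ *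
      Equiv.swap ⟨n + i - 1, by omega⟩ ⟨n + i, by omega⟩
  else if h2 : i = n ∧ 2 ≤ n then
    Equiv.swap ⟨n - 1, by omega⟩ ⟨2 * n - 2, by omega⟩ *
      Equiv.swap ⟨n - 2, by omega⟩ ⟨2 * n - 1, by omega⟩
  else 1

/-- Membership in the Weyl group `W`: `σ(n+i) ≡ n + σ(i) (mod 2n)` for all `1 ≤ i ≤ n`,
and the number of `i ∈ {1,…,n}` with `σ(i) > n` is even. (All positions are 0-based; a
0-based value `v` corresponds to the 1-based value `v+1`.) -/
def inW (n : ℕ) (σ : Equiv.Perm (Fin (2 * n))) : Prop :=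
  (∀ i : Fin n,
    ((σ ⟨n + (i : ℕ), by have := i.isLt; omega⟩ : Fin (2 * n)) : ℕ)
      ≡ n + ((σ ⟨(i : ℕ), by have := i.isLt; omega⟩ : Fin (2 * n)) : ℕ) [MOD 2 * n]) ∧
  Even (Finset.univ.filter (fun i : Fin n =>
    n ≤ ((σ ⟨(i : ℕ), by have := i.isLt; omega⟩ : Fin (2 * n)) : ℕ))).card

/-- `I_w = {i ∈ {1,…,n} : w(i) > n}`, as a finset of `Fin n` (0-based). -/
def Iset (n : ℕ) (σ : Equiv.Perm (Fin (2 * n))) : Finset (Fin n) :=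
  Finset.univ.filter (fun i : Fin n =>
    n ≤ ((σ ⟨(i : ℕ), by have := i.isLt; omega⟩ : Fin (2 * n)) : ℕ))

/-- The parabolic subgroup `W_{[n-1]}` generated by `s_1, …, s_{n-1}`. -/
def Wpar (n : ℕ) : Subgroup (Equiv.Perm (Fin (2 * n))) :=
  Subgroup.closure { σ | ∃ i, 1 ≤ i ∧ i ≤ n - 1 ∧ σ = sGen n i }

/-- The standard basis vector `e_i` of `ℝ^{2n}` (with `i : Fin n` 0-based, sitting in
position `i` of the first block). -/
def evec (n : ℕ) (i : Fin n) : Fin (2 * n) → ℝ :=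
  Pi.single ⟨(i : ℕ), by have := i.isLt; omega⟩ 1

/-- The standard basis vector `f_j` of `ℝ^{2n}` (position `n + j`). -/
def fvec (n : ℕ) (j : Fin n) : Fin (2 * n) → ℝ :=
  Pi.single ⟨n + (j : ℕ), by have := j.isLt; omega⟩ 1

/-- `f = ι(f_1)⋯ι(f_n)` in the Clifford algebra. -/
def fElt {n : ℕ} (Q : QuadraticForm ℝ (Fin (2 * n) → ℝ)) : CliffordAlgebra Q :=
  (List.ofFn (fun j : Fin n => CliffordAlgebra.ι Q (fvec n j))).prod

/-- `e_S = ι(e_{l_1})⋯ι(e_{l_s})` where `l_1 < ⋯ < l_s` enumerates `S`. -/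
def eProd {n : ℕ} (Q : QuadraticForm ℝ (Fin (2 * n) → ℝ)) (S : Finset (Fin n)) :
    CliffordAlgebra Q :=
  ((S.sort (· ≤ ·)).map (fun l => CliffordAlgebra.ι Q (evec n l))).prod

/-- `h = Π_{i=1}^n ι(e_i + Σ_j A_{ij} f_j)` (product in increasing order of `i`). -/
def hElt {n : ℕ} (Q : QuadraticForm ℝ (Fin (2 * n) → ℝ)) (A : Matrix (Fin n) (Fin n) ℝ) :
    CliffordAlgebra Q :=
  (List.ofFn (fun i : Fin n =>
    CliffordAlgebra.ι Q (evec n i + ∑ j : Fin n, A i j • fvec n j))).prod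

/-- The sorted list of the (1-based) elements of `S ⊆ {1,…,n}`. -/
def valsOf {n : ℕ} (S : Finset (Fin n)) : List ℕ :=
  (S.sort (· ≤ ·)).map (fun i => (i : ℕ) + 1)

/-- The word `w_1 w_2 ⋯ w_r` where
`w_m = s_n (s_{n-2}⋯s_{i_{2m-1}}) (s_{n-1}⋯s_{i_{2m}})` and `vals` lists `i_1 < i_2 < ⋯`
(1-based); `m` is 0-based here. -/
def uWord (n r : ℕ) (vals : List ℕ) : List ℕ :=
  ((List.range r).map (fun m =>
    n :: (decRun (n - 2) (vals.getD (2 * m) 0) ++ decRun (n - 1) (vals.getD (2 * m + 1) 0)))).flatten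

/-- The permutation `u = w_1 w_2 ⋯ w_r`. -/
def uPerm (n r : ℕ) (vals : List ℕ) : Equiv.Perm (Fin (2 * n)) :=
  ((uWord n r vals).map (sGen n)).prod

/-- `L = r + Σ_{m=1}^{r} ((n-1-i_{2m-1}) + (n-i_{2m}))`. -/
def Lval (n r : ℕ) (vals : List ℕ) : ℕ :=
  r + ∑ m ∈ Finset.range r, ((n - 1 - vals.getD (2 * m) 0) + (n - vals.getD (2 * m + 1) 0))

/-! Cut the word into runs: for `s = 0, 1, …` the run `s` consists of the letters `n-1, …, s+1`,
with `n` in place of `n-1` when `s` is even. Let `τ s q` be the parameter at the letter `q` of the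
run `s`. Up to swapping the columns `e_{n-1}` and `f_{n-1}` in the even runs, the run `s` acts on
the columns `u_q`, `v_q` of `[X₁ | X₂]` by `u_q += τ s q * u_{q-1}` and `v_q -= τ s (q+1) *
v_{q+1}`. Following these recurrences, the columns of `X₂` other than the last vanish strictly
above the antidiagonal and their antidiagonal entries are signed monomials; likewise a minor of
`X₁` on its first `j` rows and on `j` consecutive columns, not including the last, is a monomial.

As `det X₁ = 1` and `X₁ A = X₂`, the minor `M_{j,k}(A)` is the determinant whose first `n-j`
columns are taken from `X₂` and whose remaining `j` columns are consecutive columns of `X₁`. It is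
therefore a product of antidiagonal entries of `X₂` and of one such minor of `X₁`, hence a
monomial. Taking successive quotients of these monomials recovers first the antidiagonal entries,
then the minors of `X₁`, then every `τ s q` with `q < n-1`, and finally, by induction on `s`, the
parameters `τ s (n-1)` from the antidiagonal entries. -/

section Determinants

variable {R : Type*} [CommRing R]

/-- The determinant of the leading `m × m` block of an infinite matrix. Indexing by `ℕ` lets rows
and columns be shifted without transporting `Fin` bounds. -/
def natDet (m : ℕ) (F : ℕ → ℕ → R) : R := Matrix.det (Matrix.of fun p q : Fin m => F p q)

theorem natDet_congr {m : ℕ} {F G : ℕ → ℕ → R} (h : ∀ p < m, ∀ q < m, F p q = G p q) :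
    natDet m F = natDet m G := by
  unfold natDet
  congr 1
  ext p q
  exact h p p.2 q q.2

theorem natDet_of_lowerTriangular {m : ℕ} {F : ℕ → ℕ → R}
    (h : ∀ p q, p < q → q < m → F p q = 0) : natDet m F = ∏ i ∈ Finset.range m, F i i := by
  rw [natDet, Matrix.det_of_isLowerTriangular]
  · simp [Finset.prod_range]
  · exact fun p q hpq => h p q (by simpa using hpq) q.2

theorem natDet_of_upperTriangular {m : ℕ} {F : ℕ → ℕ → R}
    (h : ∀ p q, q < p → p < m → F p q = 0) : natDet m F = ∏ i ∈ Finset.range m, F i i := by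
  rw [natDet, Matrix.det_of_isUpperTriangular]
  · simp [Finset.prod_range]
  · exact fun p q hpq => h p q (by simpa using hpq) p.2

theorem natDet_succ_of_last_column {m r : ℕ} (hr : r ≤ m) {F : ℕ → ℕ → R}
    (h : ∀ p ≤ m, p ≠ r → F p m = 0) :
    natDet (m + 1) F =
      (-1) ^ (r + m) * F r m * natDet m (fun p q => F (if p < r then p else p + 1) q) := by
  unfold natDet
  rw [Matrix.det_succ_column _ (Fin.last m),
    Finset.sum_eq_single_of_mem (⟨r, by omega⟩ : Fin (m + 1)) (Finset.mem_univ _)]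
  · simp only [Matrix.of_apply, Fin.val_last]
    congr 2
    ext p q
    simp only [Matrix.submatrix_apply, Matrix.of_apply, Fin.succAbove_last, Fin.val_castSucc,
      Fin.succAbove, Fin.lt_def]
    split_ifs <;> rfl
  · intro p _ hp
    simp [h p (by omega) (fun e => hp (Fin.ext e))]

theorem natDet_succ_of_first_column {m : ℕ} {F : ℕ → ℕ → R} (h : ∀ p < m, F p 0 = 0) :
    natDet (m + 1) F = (-1) ^ m * F m 0 * natDet m (fun p q => F p (q + 1)) := by
  unfold natDet
  rw [Matrix.det_succ_column_zero, Finset.sum_eq_single_of_mem (Fin.last m) (Finset.mem_univ _)]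
  · simp only [Matrix.of_apply, Fin.val_last]
    congr 2
    ext p q
    simp
  · intro p _ hp
    simp [h p (by have := Fin.val_lt_last hp; omega)]

theorem natDet_add_mul_prev_column (m : ℕ) (F : ℕ → ℕ → R) (c : ℕ → R) :
    natDet m (fun p q => F p q + if q = 0 then 0 else c q * F p (q - 1)) = natDet m F := by
  cases m with
  | zero => simp [natDet]
  | succ m =>
    refine (Matrix.det_eq_of_forall_col_eq_smul_add_pred (fun q => -c (q + 1)) ?_ ?_).symm
    · simp
    · simp

theorem natDet_unit_columns (a b j : ℕ) (F : ℕ → ℕ → R) :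
    natDet (a + b + j) (fun p q => if q < a + b then F p q else
      if p = a + (q - (a + b)) then 1 else 0) =
    (-1) ^ (b * j) * natDet (a + b) (fun p q => F (if p < a then p else p + j) q) := by
  induction j generalizing F with
  | zero =>
    simp only [mul_zero, pow_zero, one_mul, add_zero, ite_self]
    exact natDet_congr fun p _ q hq => if_pos hq
  | succ j ih =>
    have sign : (-1 : R) ^ (a + j + (a + b + j)) * (-1) ^ (b * j) = (-1) ^ (b * (j + 1)) := by
      rw [← pow_add, show a + j + (a + b + j) + b * j = 2 * (a + j) + b * (j + 1) by ring,
        pow_add, pow_mul]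
      simp
    have drop_row : natDet (a + b + j) (fun p q => if q < a + b then
          F (if p < a + j then p else p + 1) q else
          if (if p < a + j then p else p + 1) = a + (q - (a + b)) then 1 else 0) =
        natDet (a + b + j) (fun p q => if q < a + b then
          F (if p < a + j then p else p + 1) q else
          if p = a + (q - (a + b)) then 1 else 0) :=
      natDet_congr fun p _ q _ => by grind
    have shift_rows : natDet (a + b) (fun p q => F (if (if p < a then p else p + j) < a + j then
          (if p < a then p else p + j) else (if p < a then p else p + j) + 1) q) =
        natDet (a + b) (fun p q => F (if p < a then p else p + (j + 1)) q) :=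
      natDet_congr fun p _ q _ => by grind
    rw [← add_assoc, natDet_succ_of_last_column (r := a + j) (by omega) (by grind), drop_row,
      ih (fun p q => F (if p < a + j then p else p + 1) q), shift_rows, ← sign]
    rw [if_neg (by omega), if_pos (by omega)]
    ring

theorem natDet_of_antitriangular_left (c j : ℕ) (F : ℕ → ℕ → R)
    (h : ∀ p q, q < c → p + q + 1 < c + j → F p q = 0) :
    natDet (c + j) F =
      (∏ i ∈ Finset.range c, (-1) ^ (c + j - 1 - i) * F (c + j - 1 - i) i) *
        natDet j (fun p q => F p (q + c)) := by
  induction c generalizing F with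
  | zero => simp
  | succ c ih =>
    have first_column : ∀ p < c + j, F p 0 = 0 := fun p hp => h p 0 (by omega) (by omega)
    have index (i : ℕ) : c + j - 1 - i = c + j - (i + 1) := by omega
    rw [show c + 1 + j = (c + j) + 1 by ring, natDet_succ_of_first_column first_column,
      ih (fun p q => F p (q + 1)) (fun p q h1 h2 => h p (q + 1) (by omega) (by omega)),
      Finset.prod_range_succ']
    simp only [index, Nat.add_sub_cancel, Nat.sub_zero, ← add_assoc]
    ring

end Determinants

section NatEntry

variable {R : Type*} {m n : ℕ}

/-- The entries of a finite matrix indexed by natural numbers, with value `0` out of range. -/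
def natEntry [Zero R] (Y : Matrix (Fin m) (Fin n) R) (p q : ℕ) : R :=
  if h : p < m ∧ q < n then Y ⟨p, h.1⟩ ⟨q, h.2⟩ else 0

theorem natEntry_of_lt [Zero R] (Y : Matrix (Fin m) (Fin n) R) {p q : ℕ} (hp : p < m)
    (hq : q < n) : natEntry Y p q = Y ⟨p, hp⟩ ⟨q, hq⟩ := dif_pos ⟨hp, hq⟩

theorem natEntry_val [Zero R] (Y : Matrix (Fin m) (Fin n) R) (p : Fin m) (q : Fin n) :
    natEntry Y p q = Y p q := natEntry_of_lt Y p.2 q.2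

theorem natEntry_one [Zero R] [One R] {p q : ℕ} (hp : p < n) (hq : q < n) :
    natEntry (1 : Matrix (Fin n) (Fin n) R) p q = if p = q then 1 else 0 := by
  simp [natEntry_of_lt _ hp hq, Matrix.one_apply]

theorem natEntry_mul [NonUnitalNonAssocSemiring R] {l : ℕ} (Y : Matrix (Fin l) (Fin m) R)
    (Z : Matrix (Fin m) (Fin n) R) (p q : ℕ) :
    natEntry (Y * Z) p q = ∑ x ∈ Finset.range m, natEntry Y p x * natEntry Z x q := by
  rw [Finset.sum_range]
  by_cases h : p < l ∧ q < n
  · rw [natEntry_of_lt _ h.1 h.2, Matrix.mul_apply]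
    exact Finset.sum_congr rfl fun x _ => by
      rw [natEntry_of_lt _ h.1 x.2, natEntry_of_lt _ x.2 h.2]
  · rw [natEntry, dif_neg h]
    refine (Finset.sum_eq_zero fun x _ => ?_).symm
    rcases not_and_or.mp h with hp | hq
    · simp [natEntry, hp]
    · simp [natEntry, hq]

theorem natDet_natEntry [CommRing R] (Y : Matrix (Fin n) (Fin n) R) :
    natDet n (natEntry Y) = Y.det := by
  simp only [natDet, natEntry_val]
  rfl

end NatEntry

section Word

/-- The letters of the reduced word are indexed by the boxes `(s, q)`, `s < q < n`, of a staircase.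
For `s = 0, 1, …` the `s`-th run lists the boxes `(s, n-1), …, (s, s+1)`, so that the `m`-th block
of the word consists of the runs `2m` and `2m + 1`. -/
def boxes (n : ℕ) : List (ℕ × ℕ) :=
  (List.range n).flatMap fun s => (decRun (n - 1) (s + 1)).map (Prod.mk s)

/-- The letter of the word at the box `(s, q)`. -/
def boxLetter (n s q : ℕ) : ℕ := if q + 1 = n ∧ Even s then n else q

/-- The parameter `t_l` attached to the letter at the box `(s, q)`. -/
def boxParam {α : Type*} (n : ℕ) (t : ℕ → α) (s q : ℕ) : α := t ((boxes n).idxOf (s, q))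

theorem mem_decRun {a b x : ℕ} : x ∈ decRun a b ↔ b ≤ x ∧ x ≤ a := by
  simp only [decRun, List.mem_reverse, List.mem_range'_1]
  omega

theorem nodup_decRun (a b : ℕ) : (decRun a b).Nodup :=
  List.nodup_reverse.mpr List.nodup_range'

theorem decRun_eq_nil {a b : ℕ} (h : a < b) : decRun a b = [] := by
  simp [decRun, Nat.sub_eq_zero_of_le h]

theorem decRun_succ {a b : ℕ} (h : b ≤ a + 1) : decRun (a + 1) b = (a + 1) :: decRun a b := by
  rw [decRun, decRun, show a + 1 + 1 - b = a + 1 - b + 1 by omega, List.range'_concat]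
  rw [List.reverse_append, List.reverse_singleton, List.singleton_append]
  congr 1
  omega

theorem mem_boxes {n s q : ℕ} : (s, q) ∈ boxes n ↔ s < q ∧ q < n := by
  simp only [boxes, List.mem_flatMap, List.mem_range, List.mem_map, mem_decRun, Prod.mk.injEq,
    exists_eq_right_right]
  omega

theorem nodup_boxes (n : ℕ) : (boxes n).Nodup := by
  refine List.nodup_flatMap.mpr ⟨fun s _ => (nodup_decRun _ _).map (Prod.mk_right_injective s), ?_⟩
  refine List.nodup_range.imp fun {s s'} hne => ?_
  rw [Function.onFun, List.disjoint_left]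
  simp only [List.mem_map]
  rintro _ ⟨q, -, rfl⟩ ⟨q', -, h⟩
  exact hne (congrArg Prod.fst h).symm

theorem length_boxes (n : ℕ) : (boxes n).length = Npar n := by
  have length_run (s : ℕ) : n - 1 + 1 - (s + 1) = n - 1 - s := by omega
  calc (boxes n).length = ((List.range n).map fun s => n - 1 - s).sum := by
        simp [boxes, decRun, length_run, List.length_flatMap]
    _ = ∑ s ∈ Finset.range n, (n - 1 - s) := rfl
    _ = Npar n := by rw [Finset.sum_range_reflect (fun s => s), Finset.sum_range_id, Npar]

theorem flatMap_range_two_mul {α : Type*} (f : ℕ → List α) (m : ℕ) :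
    (List.range m).flatMap (fun i => f (2 * i) ++ f (2 * i + 1)) =
      (List.range (2 * m)).flatMap f := by
  induction m with
  | zero => simp
  | succ m ih => simp [mul_add, List.range_succ, List.flatMap_append, ih]

theorem map_boxLetter_even_run {n m : ℕ} (h : m < n / 2) :
    (decRun (n - 1) (2 * m + 1)).map (boxLetter n (2 * m)) = n :: decRun (n - 2) (2 * m + 1) := by
  obtain ⟨n, rfl⟩ := Nat.exists_eq_add_of_le' (show 2 ≤ n by omega)
  rw [show n + 2 - 1 = n + 1 by omega, decRun_succ (by omega), List.map_cons]
  congr 1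
  · simp [boxLetter]
  · refine (List.map_congr_left fun q hq => if_neg ?_).trans (List.map_id _)
    have := mem_decRun.mp hq
    omega

theorem map_boxLetter_odd_run (n m : ℕ) :
    (decRun (n - 1) (2 * m + 2)).map (boxLetter n (2 * m + 1)) = decRun (n - 1) (2 * m + 2) := by
  refine (List.map_congr_left fun q _ => if_neg ?_).trans (List.map_id _)
  simp

theorem wordD_eq_map_boxes (n : ℕ) : wordD n = (boxes n).map fun b => boxLetter n b.1 b.2 := by
  let run (s : ℕ) : List ℕ := (decRun (n - 1) (s + 1)).map (boxLetter n s)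
  have blocks : wordD n = (List.range (2 * (n / 2))).flatMap run := by
    rw [← flatMap_range_two_mul, List.flatMap_def, wordD]
    refine congrArg List.flatten (List.map_congr_left fun m hm => ?_)
    rw [← List.cons_append, ← map_boxLetter_even_run (List.mem_range.mp hm),
      ← map_boxLetter_odd_run n m]
  have runs : (List.range (2 * (n / 2))).flatMap run = (List.range n).flatMap run := by
    rcases Nat.even_or_odd' n with ⟨m, rfl | rfl⟩
    · simp
    · rw [show 2 * ((2 * m + 1) / 2) = 2 * m by omega, List.range_succ, List.flatMap_append]
      simp [run, decRun_eq_nil]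
  rw [blocks, runs, boxes, List.map_flatMap]
  simp [run, Function.comp_def]

theorem map_range_getD_eq_map_idxOf {α β γ : Type*} [BEq α] [LawfulBEq α] {L : List α}
    (hL : L.Nodup) (f : α → β) (d : β) (g : β → ℕ → γ) :
    (List.range L.length).map (fun l => g ((L.map f).getD l d) l) =
      L.map fun a => g (f a) (L.idxOf a) := by
  refine List.ext_getElem (by simp) fun i _ h => ?_
  rw [List.length_map] at h
  simp [h, hL.idxOf_getElem]

theorem exists_boxParam_eq {n i : ℕ} (hi : i < Npar n) :
    ∃ s q, s < q ∧ q < n ∧ ∀ {α : Type} (t : ℕ → α), boxParam n t s q = t i := by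
  rw [← length_boxes] at hi
  obtain ⟨hsq, hq⟩ := mem_boxes.mp (List.getElem_mem hi)
  exact ⟨_, _, hsq, hq, fun t => congrArg t ((nodup_boxes n).idxOf_getElem i hi)⟩

end Word

section Runs

variable {n s : ℕ}

/-- The column playing the role of `e_q` during the run `s`. In an even run `e_{n-1}` and
`f_{n-1}` are swapped; this turns the letter `n` that opens the run into the letter `n - 1`, so that
all runs act in the same way. -/
def uCol (n s q : ℕ) : ℕ := if q + 1 = n ∧ Even s then n + q else q

/-- The column playing the role of `f_q` during the run `s`; see `uCol`. -/
def vCol (n s q : ℕ) : ℕ := if q + 1 = n ∧ Even s then q else n + q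

theorem uCol_lt {q : ℕ} (hq : q < n) : uCol n s q < 2 * n := by
  unfold uCol
  split_ifs <;> omega

theorem vCol_lt {q : ℕ} (hq : q < n) : vCol n s q < 2 * n := by
  unfold vCol
  split_ifs <;> omega

theorem uCol_of_succ_lt {q : ℕ} (hq : q + 1 < n) : uCol n s q = q := if_neg fun h => by omega

theorem vCol_of_succ_lt {q : ℕ} (hq : q + 1 < n) : vCol n s q = n + q := if_neg fun h => by omega

theorem uCol_succ_of_succ_lt {q : ℕ} (hq : q + 1 < n) : uCol n (s + 1) q = uCol n s q :=
  (uCol_of_succ_lt hq).trans (uCol_of_succ_lt hq).symm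

theorem vCol_succ_of_succ_lt {q : ℕ} (hq : q + 1 < n) : vCol n (s + 1) q = vCol n s q :=
  (vCol_of_succ_lt hq).trans (vCol_of_succ_lt hq).symm

theorem uCol_succ_last {q : ℕ} (hq : q + 1 = n) : uCol n (s + 1) q = vCol n s q := by
  simp only [uCol, vCol, hq, Nat.even_add_one, true_and, ite_not]

theorem vCol_succ_last {q : ℕ} (hq : q + 1 = n) : vCol n (s + 1) q = uCol n s q := by
  simp only [uCol, vCol, hq, Nat.even_add_one, true_and, ite_not]

theorem natEntry_xMat_uCol {q r x : ℕ} (hr : r + 1 < n) (hq : q < n) (hx : x < 2 * n) (c : ℝ) :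
    natEntry (xMat n (boxLetter n s (r + 1)) c) x (uCol n s q) =
      (if x = uCol n s q then 1 else 0) + if q = r + 1 ∧ x = uCol n s r then c else 0 := by
  rw [natEntry_of_lt _ hx (uCol_lt hq), uCol_of_succ_lt (s := s) hr]
  simp only [xMat, Matrix.of_apply, boxLetter, uCol]
  grind

theorem natEntry_xMat_vCol {q r x : ℕ} (hr : r + 1 < n) (hq : q < n) (hx : x < 2 * n) (c : ℝ) :
    natEntry (xMat n (boxLetter n s (r + 1)) c) x (vCol n s q) =
      (if x = vCol n s q then 1 else 0) + if q = r ∧ x = vCol n s (r + 1) then -c else 0 := by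
  rw [natEntry_of_lt _ hx (vCol_lt hq)]
  simp only [xMat, Matrix.of_apply, boxLetter, vCol]
  grind

variable {l p : ℕ} (Y : Matrix (Fin l) (Fin (2 * n)) ℝ)

theorem natEntry_mul_xMat_uCol {q r : ℕ} (hr : r + 1 < n) (hq : q < n) (c : ℝ) :
    natEntry (Y * xMat n (boxLetter n s (r + 1)) c) p (uCol n s q) =
      natEntry Y p (uCol n s q) + if q = r + 1 then c * natEntry Y p (uCol n s r) else 0 := by
  rw [natEntry_mul, Finset.sum_congr rfl fun x hx => by
    rw [natEntry_xMat_uCol hr hq (Finset.mem_range.mp hx)]]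
  simp [mul_add, Finset.sum_add_distrib, ite_and, uCol_lt hq, uCol_lt (Nat.lt_of_succ_lt hr),
    mul_comm c]

theorem natEntry_mul_xMat_vCol {q r : ℕ} (hr : r + 1 < n) (hq : q < n) (c : ℝ) :
    natEntry (Y * xMat n (boxLetter n s (r + 1)) c) p (vCol n s q) =
      natEntry Y p (vCol n s q) - if q = r then c * natEntry Y p (vCol n s (r + 1)) else 0 := by
  rw [natEntry_mul, Finset.sum_congr rfl fun x hx => by
    rw [natEntry_xMat_vCol hr hq (Finset.mem_range.mp hx)]]
  rcases eq_or_ne q r with rfl | hne <;>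
    simp [mul_add, Finset.sum_add_distrib, vCol_lt hq, vCol_lt hr, mul_comm c, sub_eq_add_neg, *]

/-- The product of the letters `x_q(τ q)` of the run `s`, for `q` decreasing from `r` to `s + 1`. -/
def runMat (n s : ℕ) (τ : ℕ → ℝ) (r : ℕ) : Matrix (Fin (2 * n)) (Fin (2 * n)) ℝ :=
  ((decRun r (s + 1)).map fun q => xMat n (boxLetter n s q) (τ q)).prod

theorem runMat_of_le (n : ℕ) (τ : ℕ → ℝ) {r : ℕ} (h : r ≤ s) : runMat n s τ r = 1 := by
  simp [runMat, decRun_eq_nil (Nat.lt_succ_of_le h)]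

theorem runMat_succ (n : ℕ) (τ : ℕ → ℝ) {r : ℕ} (h : s ≤ r) :
    runMat n s τ (r + 1) = xMat n (boxLetter n s (r + 1)) (τ (r + 1)) * runMat n s τ r := by
  simp [runMat, decRun_succ (Nat.succ_le_succ h)]

theorem natEntry_mul_runMat_uCol (τ : ℕ → ℝ) {q r : ℕ} (hr : r < n) (hq : q < n) :
    natEntry (Y * runMat n s τ r) p (uCol n s q) =
      natEntry Y p (uCol n s q) +
        if s < q ∧ q ≤ r then τ q * natEntry Y p (uCol n s (q - 1)) else 0 := by
  induction r generalizing Y with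
  | zero => rw [runMat_of_le _ _ (Nat.zero_le s), Matrix.mul_one, if_neg (by omega), add_zero]
  | succ r ih =>
    rcases Nat.lt_or_ge r s with hrs | hsr
    · rw [runMat_of_le _ _ hrs, Matrix.mul_one, if_neg (by omega), add_zero]
    · rw [runMat_succ _ _ hsr, ← Matrix.mul_assoc, ih _ (by omega),
        natEntry_mul_xMat_uCol _ hr hq, natEntry_mul_xMat_uCol _ hr (by omega)]
      grind

theorem natEntry_mul_runMat_vCol (τ : ℕ → ℝ) {q r : ℕ} (hr : r < n) (hq : q < n) :
    natEntry (Y * runMat n s τ r) p (vCol n s q) =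
      natEntry Y p (vCol n s q) - if s ≤ q ∧ q < r then
        τ (q + 1) * natEntry (Y * runMat n s τ r) p (vCol n s (q + 1)) else 0 := by
  induction r generalizing Y q with
  | zero => rw [runMat_of_le _ _ (Nat.zero_le s), Matrix.mul_one, if_neg (by omega), sub_zero]
  | succ r ih =>
    rcases Nat.lt_or_ge r s with hrs | hsr
    · rw [runMat_of_le _ _ hrs, Matrix.mul_one, if_neg (by omega), sub_zero]
    · have multiplied_last := natEntry_mul_xMat_vCol (p := p) (s := s) Y hr hr (τ (r + 1))
      have run_last := ih (Y * xMat n (boxLetter n s (r + 1)) (τ (r + 1))) (by omega) hr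
      rw [runMat_succ _ _ hsr, ← Matrix.mul_assoc, ih _ (by omega) hq,
        natEntry_mul_xMat_vCol _ hr hq]
      grind

end Runs

section Monomials

variable {α : Type*} [CommMonoid α]

/-- Up to sign, the antidiagonal entry of `X₂` in column `i`. -/
def antidiagMonomial (n : ℕ) (τ : ℕ → ℕ → α) (i : ℕ) : α :=
  (∏ x ∈ Finset.range i, τ x (n - i + x)) * ∏ q ∈ Finset.Ico (i + 1) n, τ i q

/-- The minor of `X₁` with rows `0, …, j - 1` and columns `a, …, a + j - 1`. -/
def topMinorMonomial (τ : ℕ → ℕ → α) (a j : ℕ) : α :=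
  ∏ x ∈ Finset.range a, ∏ p ∈ Finset.range j, τ x (x + 1 + p)

/-- The monomial in the parameters that equals the minor `M_{j,k}(A)`. -/
def minorMonomial (n : ℕ) (τ : ℕ → ℕ → α) (j k : ℕ) : α :=
  (∏ i ∈ Finset.range (n - j), antidiagMonomial n τ i) * topMinorMonomial τ (n - 1 - k) j

end Monomials

section Columns

variable {n : ℕ} {τ : ℕ → ℕ → ℝ} {s p q : ℕ}

/-- The product of the runs `0, …, s - 1`. -/
def runProd (n : ℕ) (τ : ℕ → ℕ → ℝ) (s : ℕ) : Matrix (Fin (2 * n)) (Fin (2 * n)) ℝ :=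
  ((List.range s).map fun x => runMat n x (τ x) (n - 1)).prod

theorem runProd_succ (n : ℕ) (τ : ℕ → ℕ → ℝ) (s : ℕ) :
    runProd n τ (s + 1) = runProd n τ s * runMat n s (τ s) (n - 1) := by
  simp [runProd, List.range_succ]

theorem prodX_eq_runProd (n : ℕ) (t : ℕ → ℝ) : prodX n t = runProd n (boxParam n t) n := by
  rw [prodX, wordD_eq_map_boxes, ← length_boxes,
    map_range_getD_eq_map_idxOf (nodup_boxes n) _ 0 fun i l => xMat n i (t l)]
  simp [boxes, runProd, runMat, boxParam, List.flatMap_def, List.prod_flatten,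
    Function.comp_def]

/-- The entries of the columns `uCol n s q` of the product of the first `s` runs. -/
def uEntry (n : ℕ) (τ : ℕ → ℕ → ℝ) (s p q : ℕ) : ℝ := natEntry (runProd n τ s) p (uCol n s q)

/-- The entries of the columns `vCol n s q` of the product of the first `s` runs. -/
def vEntry (n : ℕ) (τ : ℕ → ℕ → ℝ) (s p q : ℕ) : ℝ := natEntry (runProd n τ s) p (vCol n s q)

theorem uEntry_succ (hq : q + 1 < n) :
    uEntry n τ (s + 1) p q =
      uEntry n τ s p q + if s < q then τ s q * uEntry n τ s p (q - 1) else 0 := by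
  rw [uEntry, uCol_succ_of_succ_lt hq, runProd_succ,
    natEntry_mul_runMat_uCol _ _ (by omega) (by omega)]
  simp only [show q ≤ n - 1 by omega, and_true]
  rfl

theorem uEntry_succ_last (hq : q + 1 = n) : uEntry n τ (s + 1) p q = vEntry n τ s p q := by
  rw [uEntry, uCol_succ_last hq, runProd_succ,
    natEntry_mul_runMat_vCol _ _ (by omega) (by omega), if_neg (by omega), sub_zero, vEntry]

theorem vEntry_succ_last (hq : q + 1 = n) :
    vEntry n τ (s + 1) p q =
      uEntry n τ s p q + if s < q then τ s q * uEntry n τ s p (q - 1) else 0 := by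
  rw [vEntry, vCol_succ_last hq, runProd_succ,
    natEntry_mul_runMat_uCol _ _ (by omega) (by omega)]
  simp only [show q ≤ n - 1 by omega, and_true]
  rfl

theorem vEntry_succ_of_lt (hq : q + 1 < n) (hs : q < s) :
    vEntry n τ (s + 1) p q = vEntry n τ s p q := by
  rw [vEntry, vCol_succ_of_succ_lt hq, runProd_succ,
    natEntry_mul_runMat_vCol _ _ (by omega) (by omega), if_neg (by omega), sub_zero, vEntry]

theorem vEntry_succ_of_ge (hq : q + 1 < n) (hs : s ≤ q)
    (h : ∀ q, s ≤ q → q + 1 < n → vEntry n τ s p q = 0) :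
    vEntry n τ (s + 1) p q =
      (-1) ^ (n - 1 - q) * (∏ x ∈ Finset.Ico (q + 1) n, τ s x) * vEntry n τ s p (n - 1) := by
  let v (q : ℕ) : ℝ := natEntry (runProd n τ (s + 1)) p (vCol n s q)
  have v_last : v (n - 1) = vEntry n τ s p (n - 1) := by
    simp only [v, runProd_succ]
    rw [natEntry_mul_runMat_vCol _ _ (by omega) (by omega), if_neg (by omega), sub_zero, vEntry]
  have v_step {q : ℕ} (hs : s ≤ q) (hq : q + 1 < n) : v q = -(τ s (q + 1) * v (q + 1)) := by
    simp only [v, runProd_succ]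
    rw [natEntry_mul_runMat_vCol _ _ (by omega) (by omega), if_pos ⟨hs, by omega⟩, ← vEntry,
      h q hs hq, zero_sub]
  have v_eq (d : ℕ) : ∀ q, s ≤ q → q + d + 1 = n →
      v q = (-1) ^ d * (∏ x ∈ Finset.Ico (q + 1) n, τ s x) * v (n - 1) := by
    induction d with
    | zero =>
      intro q _ hd
      simp [← hd]
    | succ d ih =>
      intro q hs hd
      rw [v_step hs (by omega), ih (q + 1) (by omega) (by omega),
        Finset.prod_eq_prod_Ico_succ_bot (show q + 1 < n by omega)]
      ring
  rw [vEntry, vCol_succ_of_succ_lt hq, ← v_last]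
  exact v_eq (n - 1 - q) q hs (by omega)

theorem uEntry_zero (hp : p < n) (hq : q + 1 < n) :
    uEntry n τ 0 p q = if p = q then 1 else 0 := by
  rw [uEntry, uCol_of_succ_lt hq]
  exact natEntry_one (by omega) (by omega)

theorem uEntry_zero_last (hp : p < n) (hq : q + 1 = n) : uEntry n τ 0 p q = 0 := by
  rw [uEntry, uCol, if_pos ⟨hq, Even.zero⟩, runProd, List.range_zero, List.map_nil, List.prod_nil,
    natEntry_one (by omega) (by omega), if_neg (by omega)]

theorem vEntry_zero (hp : p < n) (hq : q + 1 < n) : vEntry n τ 0 p q = 0 := by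
  rw [vEntry, vCol_of_succ_lt hq, runProd, List.range_zero, List.map_nil, List.prod_nil,
    natEntry_one (by omega) (by omega), if_neg (by omega)]

theorem vEntry_zero_last (hp : p < n) (hq : q + 1 = n) :
    vEntry n τ 0 p q = if p = q then 1 else 0 := by
  rw [vEntry, vCol, if_pos ⟨hq, Even.zero⟩]
  exact natEntry_one (by omega) (by omega)

theorem uEntry_eq_zero_of_lt (hp : p < n) (hqp : q < p) : uEntry n τ s p q = 0 := by
  induction s generalizing q with
  | zero => rw [uEntry_zero hp (by omega), if_neg hqp.ne']
  | succ s ih =>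
    rw [uEntry_succ (by omega), ih hqp, ih (by omega), mul_zero, ite_self, add_zero]

theorem uEntry_self (hp : p + 1 < n) : uEntry n τ s p p = 1 := by
  induction s with
  | zero => rw [uEntry_zero (by omega) hp, if_pos rfl]
  | succ s ih =>
    rw [uEntry_succ hp, ih]
    split_ifs with hs
    · rw [uEntry_eq_zero_of_lt (by omega) (by omega), mul_zero, add_zero]
    · rw [add_zero]

theorem uEntry_eq_zero_of_add_lt (hpq : p + s < q) (hq : q + 1 < n) : uEntry n τ s p q = 0 := by
  induction s generalizing q with
  | zero => rw [uEntry_zero (by omega) hq, if_neg (by omega)]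
  | succ s ih =>
    rw [uEntry_succ hq, ih (by omega) hq, ih (by omega) (by omega), mul_zero, ite_self, add_zero]

theorem uEntry_add (h : p + s + 1 < n) :
    uEntry n τ s p (p + s) = ∏ x ∈ Finset.range s, τ x (x + 1 + p) := by
  induction s with
  | zero => simpa using uEntry_self h
  | succ s ih =>
    rw [uEntry_succ h, uEntry_eq_zero_of_add_lt (by omega) h, zero_add, if_pos (by omega),
      show p + (s + 1) - 1 = p + s by omega, ih (by omega), Finset.prod_range_succ, mul_comm,
      show p + (s + 1) = s + 1 + p by omega]

theorem uEntry_last_and_vEntry_last_eq_zero (hq : q + 1 = n) (h : p + s + 1 < n) :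
    uEntry n τ s p q = 0 ∧ vEntry n τ s p q = 0 := by
  induction s with
  | zero =>
    rw [uEntry_zero_last (by omega) hq, vEntry_zero_last (by omega) hq, if_neg (by omega)]
    exact ⟨rfl, rfl⟩
  | succ s ih =>
    obtain ⟨hu, hv⟩ := ih (by omega)
    refine ⟨(uEntry_succ_last hq).trans hv, ?_⟩
    rw [vEntry_succ_last hq, hu, uEntry_eq_zero_of_add_lt (by omega) (by omega), mul_zero, ite_self,
      add_zero]

theorem vEntry_last (h : p + s + 1 = n) :
    vEntry n τ s p (n - 1) = ∏ x ∈ Finset.range s, τ x (x + 1 + p) := by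
  cases s with
  | zero => rw [vEntry_zero_last (by omega) (by omega), if_pos (by omega), Finset.prod_range_zero]
  | succ s =>
    rw [vEntry_succ_last (by omega),
      (uEntry_last_and_vEntry_last_eq_zero (by omega) (by omega)).1, zero_add, if_pos (by omega),
      show n - 1 - 1 = p + s by omega, uEntry_add (by omega), Finset.prod_range_succ, mul_comm,
      show n - 1 = s + 1 + p by omega]

theorem vEntry_eq_zero (hp : p < n) (hq : q + 1 < n) (h : p + s < n ∨ p + q + 1 < n) :
    vEntry n τ s p q = 0 := by
  induction s generalizing q with
  | zero => exact vEntry_zero hp hq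
  | succ s ih =>
    rcases Nat.lt_or_ge q s with hqs | hsq
    · rw [vEntry_succ_of_lt hq hqs]
      exact ih hq (by omega)
    · rw [vEntry_succ_of_ge hq hsq fun q _ hq => ih hq (by omega),
        (uEntry_last_and_vEntry_last_eq_zero (by omega) (by omega)).2, mul_zero]

theorem vEntry_antidiagonal {i : ℕ} (hi : i + 1 < n) (hs : i < s) :
    vEntry n τ s (n - 1 - i) i = (-1) ^ (n - 1 - i) * antidiagMonomial n τ i := by
  induction s, hs using Nat.le_induction with
  | base =>
    rw [vEntry_succ_of_ge hi le_rfl fun q _ hq => vEntry_eq_zero (by omega) hq (by omega),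
      vEntry_last (by omega), antidiagMonomial, mul_assoc, mul_comm (∏ x ∈ Finset.Ico _ _, _)]
    congr 2
    exact Finset.prod_congr rfl fun x _ => by rw [show n - i + x = x + 1 + (n - 1 - i) by omega]
  | succ s hs ih => rw [vEntry_succ_of_lt hi hs, ih]

theorem natDet_uEntry {a j : ℕ} (ha : a ≤ s) (haj : a + j < n) :
    natDet j (fun p q => uEntry n τ s p (a + q)) = topMinorMonomial τ a j := by
  induction s, ha using Nat.le_induction with
  | base =>
    rw [natDet_of_lowerTriangular fun p q _ _ => uEntry_eq_zero_of_add_lt (by omega) (by omega),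
      topMinorMonomial, Finset.prod_comm]
    refine Finset.prod_congr rfl fun p hp => ?_
    have := Finset.mem_range.mp hp
    rw [add_comm a p, uEntry_add (by omega)]
  | succ s hs ih =>
    rw [← ih, ← natDet_add_mul_prev_column j (fun p q => uEntry n τ s p (a + q))
      fun q => if s < a + q then τ s (a + q) else 0]
    refine natDet_congr fun p _ q hq => ?_
    rw [uEntry_succ (by omega)]
    rcases q with - | q
    · simp [hs.not_gt]
    · simp [← add_assoc]

theorem natEntry_runProd_last (hq : q + 1 = n) : natEntry (runProd n τ s) q q = 1 := by
  have parity : (Even s → vEntry n τ s q q = 1) ∧ (Odd s → uEntry n τ s q q = 1) := by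
    induction s with
    | zero => simp [vEntry_zero_last (show q < n by omega) hq]
    | succ s ih =>
      rw [Nat.even_add_one, Nat.odd_add_one, Nat.not_even_iff_odd, Nat.not_odd_iff_even,
        uEntry_succ_last hq, vEntry_succ_last hq]
      refine ⟨fun hs => ?_, ih.1⟩
      rw [ih.2 hs]
      split_ifs with hsq
      · rw [uEntry_eq_zero_of_lt (by omega) (by omega), mul_zero, add_zero]
      · rw [add_zero]
  rcases Nat.even_or_odd s with hs | hs
  · simpa [vEntry, vCol, hq, hs] using parity.1 hs
  · simpa [uEntry, uCol, hq, Nat.not_even_iff_odd.mpr hs] using parity.2 hs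

end Columns

section Minors

theorem Mminor_eq_natDet {n j k : ℕ} (hjk : j ≤ k) (hk : k < n)
    (A : Matrix (Fin n) (Fin n) ℝ) :
    Mminor n j k A = natDet n fun p q =>
      if q < n - j then natEntry A p q else if p = n - 1 - k + (q - (n - j)) then 1 else 0 := by
  obtain ⟨b, rfl⟩ : ∃ b, k = b + j := ⟨k - j, by omega⟩
  have sign : (-1 : ℝ) ^ (j * (b + j)) = (-1) ^ ((b + 1) * j) := neg_one_pow_congr (by grind)
  have unit_columns := natDet_unit_columns (n - 1 - (b + j)) (b + 1) j (natEntry A)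
  rw [show n - 1 - (b + j) + (b + 1) = n - j by omega, show n - j + j = n by omega]
    at unit_columns
  rw [unit_columns, Mminor, sign]
  congr 2
  ext p q
  simp only [Matrix.of_apply, show n - (b + j) - 1 = n - 1 - (b + j) by omega]
  rw [natEntry_of_lt A (by grind) (by omega)]
  congr 1
  split_ifs <;> rfl

theorem det_mul_Mminor {n j k : ℕ} (hjk : j ≤ k) (hk : k < n)
    (X A : Matrix (Fin n) (Fin n) ℝ) :
    X.det * Mminor n j k A = natDet n fun p q =>
      if q < n - j then natEntry (X * A) p q else natEntry X p (n - 1 - k + (q - (n - j))) := by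
  rw [Mminor_eq_natDet hjk hk, natDet, ← Matrix.det_mul, ← natDet_natEntry]
  refine natDet_congr fun p _ q hq => ?_
  rw [natEntry_mul]
  split_ifs with hqj
  · rw [natEntry_mul]
    refine Finset.sum_congr rfl fun x hx => ?_
    simp [natEntry_of_lt (Matrix.of _) (Finset.mem_range.mp hx) hq, hqj]
  · have hcol : n - 1 - k + (q - (n - j)) < n := by omega
    rw [Finset.sum_eq_single_of_mem _ (Finset.mem_range.mpr hcol)]
    · simp [natEntry_of_lt (Matrix.of _) hcol hq, hqj]
    · intro x hx hne
      simp [natEntry_of_lt (Matrix.of _) (Finset.mem_range.mp hx) hq, hqj, hne]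

variable {n : ℕ} (t : ℕ → ℝ)

theorem natEntry_X1 {p q : ℕ} (hp : p < n) (hq : q < n) :
    natEntry (X1 n t) p q = natEntry (runProd n (boxParam n t) n) p q := by
  rw [natEntry_of_lt _ hp hq, natEntry_of_lt _ (by omega) (by omega), ← prodX_eq_runProd]
  rfl

theorem natEntry_X1_of_succ_lt {p q : ℕ} (hp : p < n) (hq : q + 1 < n) :
    natEntry (X1 n t) p q = uEntry n (boxParam n t) n p q := by
  rw [natEntry_X1 t hp (by omega), uEntry, uCol_of_succ_lt hq]

theorem natEntry_X2_of_succ_lt {p q : ℕ} (hp : p < n) (hq : q + 1 < n) :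
    natEntry (X2 n t) p q = vEntry n (boxParam n t) n p q := by
  rw [vEntry, vCol_of_succ_lt hq, natEntry_of_lt _ hp (by omega),
    natEntry_of_lt _ (by omega) (by omega), ← prodX_eq_runProd]
  rfl

theorem det_X1 (n : ℕ) (t : ℕ → ℝ) : (X1 n t).det = 1 := by
  rw [← natDet_natEntry, natDet_of_upperTriangular]
  · refine Finset.prod_eq_one fun p hp => ?_
    have hp := Finset.mem_range.mp hp
    rcases Nat.lt_or_ge (p + 1) n with h | h
    · rw [natEntry_X1_of_succ_lt t hp h, uEntry_self h]
    · rw [natEntry_X1 t hp hp, natEntry_runProd_last (by omega)]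
  · intro p q hqp hp
    rw [natEntry_X1_of_succ_lt t hp (by omega), uEntry_eq_zero_of_lt hp hqp]

theorem X1_mul_Amat (n : ℕ) (t : ℕ → ℝ) : X1 n t * Amat n t = X2 n t := by
  rw [Amat, Matrix.mul_nonsing_inv_cancel_left _ _ (by simp [det_X1])]

theorem Mminor_Amat {j k : ℕ} (hj : 1 ≤ j) (hjk : j ≤ k) (hk : k < n) :
    Mminor n j k (Amat n t) = minorMonomial n (boxParam n t) j k := by
  obtain ⟨c, rfl⟩ : ∃ c, n = c + j := ⟨n - j, by omega⟩
  rw [← one_mul (Mminor (c + j) j k _), ← det_X1 (c + j) t, det_mul_Mminor hjk hk, X1_mul_Amat,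
    natDet_of_antitriangular_left c j, minorMonomial, Nat.add_sub_cancel,
    ← natDet_uEntry (n := c + j) (show c + j - 1 - k ≤ c + j by omega) (by omega)]
  · congr 1
    · refine Finset.prod_congr rfl fun i hi => ?_
      have hi := Finset.mem_range.mp hi
      rw [if_pos hi, natEntry_X2_of_succ_lt t (by omega) (by omega),
        vEntry_antidiagonal (by omega) (by omega), ← mul_assoc, ← mul_pow]
      simp
    · refine natDet_congr fun p hp q hq => ?_
      rw [if_neg (by omega), natEntry_X1_of_succ_lt t (by omega) (by omega), Nat.add_sub_cancel]
  · intro p q hq hpq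
    rw [if_pos (by omega), natEntry_X2_of_succ_lt t (by omega) (by omega),
      vEntry_eq_zero (by omega) (by omega) (by omega)]

end Minors

section Inversion

theorem map_minorMonomial {α β : Type*} [CommMonoid α] [CommMonoid β] (f : α →* β) (n : ℕ)
    (τ : ℕ → ℕ → α) (j k : ℕ) :
    f (minorMonomial n τ j k) = minorMonomial n (fun s q => f (τ s q)) j k := by
  simp [minorMonomial, antidiagMonomial, topMinorMonomial]

variable {G : Type*} [CommGroup G]

theorem mem_of_prod_range_mem {S : Subgroup G} {f : ℕ → G} {i : ℕ}
    (h : ∏ x ∈ Finset.range i, f x ∈ S) (h' : ∏ x ∈ Finset.range (i + 1), f x ∈ S) : f i ∈ S := by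
  rwa [Finset.prod_range_succ, S.mul_mem_cancel_left h] at h'

variable {S : Subgroup G} {n : ℕ} {τ : ℕ → ℕ → G}

theorem prod_antidiagMonomial_mem
    (h : ∀ j k, 1 ≤ j → j ≤ k → k < n → minorMonomial n τ j k ∈ S) {m : ℕ} (hm : m < n) :
    ∏ i ∈ Finset.range m, antidiagMonomial n τ i ∈ S := by
  rcases Nat.eq_zero_or_pos m with rfl | hpos
  · simp
  · simpa [minorMonomial, topMinorMonomial, Nat.sub_sub_self hm.le] using
      h (n - m) (n - 1) (by omega) (by omega) (by omega)

theorem topMinorMonomial_mem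
    (h : ∀ j k, 1 ≤ j → j ≤ k → k < n → minorMonomial n τ j k ∈ S) {a j : ℕ} (haj : a + j < n) :
    topMinorMonomial τ a j ∈ S := by
  rcases Nat.eq_zero_or_pos j with rfl | hj
  · simp [topMinorMonomial]
  · have hmem := h j (n - 1 - a) hj (by omega) (by omega)
    rwa [minorMonomial, S.mul_mem_cancel_left (prod_antidiagMonomial_mem h (by omega)),
      Nat.sub_sub_self (by omega)] at hmem

theorem param_mem_of_succ_lt
    (h : ∀ j k, 1 ≤ j → j ≤ k → k < n → minorMonomial n τ j k ∈ S) {s q : ℕ} (hsq : s < q)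
    (hq : q + 1 < n) : τ s q ∈ S := by
  have row_mem {j : ℕ} (hj : s + 1 + j < n) : ∏ p ∈ Finset.range j, τ s (s + 1 + p) ∈ S :=
    mem_of_prod_range_mem (f := fun x => ∏ p ∈ Finset.range j, τ x (x + 1 + p))
      (topMinorMonomial_mem h (by omega)) (topMinorMonomial_mem h hj)
  obtain ⟨p, rfl⟩ := Nat.exists_eq_add_of_le (Nat.succ_le_of_lt hsq)
  exact mem_of_prod_range_mem (f := fun p => τ s (s + 1 + p)) (row_mem (by omega))
    (row_mem (by omega))

theorem param_mem_of_minorMonomial_mem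
    (h : ∀ j k, 1 ≤ j → j ≤ k → k < n → minorMonomial n τ j k ∈ S) {s q : ℕ} (hsq : s < q)
    (hq : q < n) : τ s q ∈ S := by
  induction s using Nat.strong_induction_on generalizing q with
  | _ s ih =>
    rcases Nat.lt_or_ge (q + 1) n with hlt | hge
    · exact param_mem_of_succ_lt h hsq hlt
    · obtain rfl : n = q + 1 := by omega
      have antidiag_mem : antidiagMonomial (q + 1) τ s ∈ S :=
        mem_of_prod_range_mem (prod_antidiagMonomial_mem h (by omega))
          (prod_antidiagMonomial_mem h (by omega))
      have earlier_runs_mem : ∏ x ∈ Finset.range s, τ x (q + 1 - s + x) ∈ S :=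
        S.prod_mem fun x hx => by
          have := Finset.mem_range.mp hx
          exact ih x this (by omega) (by omega)
      have same_run_mem : ∏ x ∈ Finset.Ico (s + 1) q, τ s x ∈ S :=
        S.prod_mem fun x hx => by
          have := Finset.mem_Ico.mp hx
          exact param_mem_of_succ_lt h (by omega) (by omega)
      rwa [antidiagMonomial, S.mul_mem_cancel_left earlier_runs_mem,
        Finset.prod_Ico_succ_top (by omega), S.mul_mem_cancel_left same_run_mem] at antidiag_mem

theorem exists_prod_zpow_of_mem_closure_image {ι : Type*} {I : Finset ι} {f : ι → G} {x : G}
    (hx : x ∈ Subgroup.closure (f '' I)) : ∃ c : ι → ℤ, x = ∏ i ∈ I, f i ^ c i := by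
  classical
  rw [Set.image_eq_range] at hx
  obtain ⟨a, rfl⟩ := Subgroup.exists_of_mem_closure_range _ _ hx
  refine ⟨fun i => if h : i ∈ I then a ⟨i, h⟩ else 0, ?_⟩
  rw [← Finset.prod_coe_sort I]
  simp

variable (G) in
theorem exists_param_eq_prod_minorMonomial_zpow {n s q : ℕ} (hsq : s < q) (hq : q < n) :
    ∃ c : ℕ → ℕ → ℤ, ∀ τ : ℕ → ℕ → G,
      τ s q = ∏ j ∈ Finset.Icc 1 (n - 1), ∏ k ∈ Finset.Icc j (n - 1),
        minorMonomial n τ j k ^ c j k := by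
  let param (s q : ℕ) : (ℕ → ℕ → G) → G := fun τ => τ s q
  let pairs : Finset ((_ : ℕ) × ℕ) := (Finset.Icc 1 (n - 1)).sigma fun j => Finset.Icc j (n - 1)
  let minor (jk : (_ : ℕ) × ℕ) : (ℕ → ℕ → G) → G := minorMonomial n param jk.1 jk.2
  have mem_pairs {j k : ℕ} (hj : 1 ≤ j) (hjk : j ≤ k) (hk : k < n) : ⟨j, k⟩ ∈ pairs := by
    simp only [pairs, Finset.mem_sigma, Finset.mem_Icc]
    omega
  have param_mem : param s q ∈ Subgroup.closure (minor '' pairs) :=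
    param_mem_of_minorMonomial_mem (fun j k hj hjk hk => Subgroup.subset_closure
      (Set.mem_image_of_mem minor (mem_pairs hj hjk hk))) hsq hq
  have minor_apply (τ : ℕ → ℕ → G) (jk : (_ : ℕ) × ℕ) :
      minor jk τ = minorMonomial n τ jk.1 jk.2 :=
    map_minorMonomial (Pi.evalMonoidHom (fun _ => G) τ) n param jk.1 jk.2
  obtain ⟨c, hc⟩ := exists_prod_zpow_of_mem_closure_image param_mem
  refine ⟨fun j k => c ⟨j, k⟩, fun τ => ?_⟩
  calc τ s q = ∏ jk ∈ pairs, minorMonomial n τ jk.1 jk.2 ^ c jk := by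
        simpa [param, minor_apply] using congrFun hc τ
    _ = _ := Finset.prod_sigma _ _ _

end Inversion

theorem Amat_congr {n : ℕ} {t t' : ℕ → ℝ} (h : ∀ l < Npar n, t l = t' l) :
    Amat n t = Amat n t' := by
  have prodX_congr : prodX n t = prodX n t' :=
    congrArg List.prod (List.map_congr_left fun l hl => by rw [h l (List.mem_range.mp hl)])
  simp only [Amat, X1, X2, prodX_congr]

theorem exists_units_eq_of_ne_zero {N : ℕ} {t : ℕ → ℝ} (h : ∀ l < N, t l ≠ 0) :
    ∃ u : ℕ → ℝˣ, ∀ l < N, t l = u l :=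
  ⟨fun l => if hl : l < N then Units.mk0 (t l) (h l hl) else 1, fun l hl => by simp [hl]⟩

theorem params_are_laurent_monomials_general (n : ℕ) :
    ∃ c : ℕ → ℕ → ℕ → ℤ,
      ∀ t : ℕ → ℝ, (∀ l < Npar n, t l ≠ 0) →
        ∀ i < Npar n,
          t i = ∏ j ∈ Finset.Icc 1 (n - 1), ∏ k ∈ Finset.Icc j (n - 1),
            Mminor n j k (Amat n t) ^ c j k i := by
  have exists_exponents (i : ℕ) : ∃ c : ℕ → ℕ → ℤ, i < Npar n → ∀ u : ℕ → ℝˣ,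
      u i = ∏ j ∈ Finset.Icc 1 (n - 1), ∏ k ∈ Finset.Icc j (n - 1),
        minorMonomial n (boxParam n u) j k ^ c j k := by
    by_cases hi : i < Npar n
    · obtain ⟨s, q, hsq, hq, hparam⟩ := exists_boxParam_eq hi
      obtain ⟨c, hc⟩ := exists_param_eq_prod_minorMonomial_zpow ℝˣ hsq hq
      exact ⟨c, fun _ u => (hparam u).symm.trans (hc (boxParam n u))⟩
    · exact ⟨0, fun h => absurd h hi⟩
  choose c hc using exists_exponents
  refine ⟨fun j k i => c i j k, fun t ht i hi => ?_⟩
  obtain ⟨u, hu⟩ := exists_units_eq_of_ne_zero ht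
  rw [hu i hi, Amat_congr hu, hc i hi u, Units.coe_prod]
  refine Finset.prod_congr rfl fun j hj => ?_
  rw [Units.coe_prod]
  refine Finset.prod_congr rfl fun k hk => ?_
  rw [Finset.mem_Icc] at hj hk
  rw [Units.val_zpow_eq_zpow_val, Mminor_Amat _ hj.1 hk.1 (by omega)]
  exact congrArg (· ^ _) (map_minorMonomial (Units.coeHom ℝ) n _ j k)

/-- The parameters `t_i` are Laurent monomials in the minors
`M_{j,k}(A(t))`: there are integers `c j k i` with
`t_i = Π_{1 ≤ j ≤ k ≤ n-1} M_{j,k}(A(t))^{c j k i}` for positive parameters. -/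
theorem params_are_laurent_monomials (n : ℕ) (hn : 2 ≤ n) :
    ∃ c : ℕ → ℕ → ℕ → ℤ,
      ∀ t : ℕ → ℝ, (∀ l < Npar n, 0 < t l) →
        ∀ i < Npar n,
          t i = ∏ j ∈ Finset.Icc 1 (n - 1), ∏ k ∈ Finset.Icc j (n - 1),
            Mminor n j k (Amat n t) ^ c j k i := by
  obtain ⟨c, hc⟩ := params_are_laurent_monomials_general n
  exact ⟨c, fun t ht => hc t fun l hl => (ht l hl).ne'⟩
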